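/- For the free n-fold free convolution of p δ₀ + (1-p) δ_{1/n} (0<p<1, n ≥ 2), the resulting measure is the free-binomial distribution β(σ,θ) with σ = n(1-p) and θ = np. -/

import Mathlib

open MeasureTheory Set

/-- `x₋` endpoint of the free-binomial continuous part. -/
noncomputable def xminus (σ θ : ℝ) : ℝ :=
  (Real.sqrt (σ / (σ + θ) * (1 - 1 / (σ + θ))) -
    Real.sqrt (1 / (σ + θ) * (1 - σ / (σ + θ)))) ^ 2

/-- `x₊` endpoint of the free-binomial continuous part. -/
noncomputable def xplus (σ θ : ℝ) : ℝ :=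
  (Real.sqrt (σ / (σ + θ) * (1 - 1 / (σ + θ))) +
    Real.sqrt (1 / (σ + θ) * (1 - σ / (σ + θ)))) ^ 2

/-- The free-binomial distribution `β(σ,θ)`:
`(1-σ)1_{0<σ<1} δ₀ + β̃ + (1-θ)1_{0<θ<1} δ₁` with `β̃` having density
`(σ+θ)√((x-x₋)(x₊-x))/(2πx(1-x))` on `(x₋, x₊)`. -/
noncomputable def freeBinomial (σ θ : ℝ) : Measure ℝ :=
  (if 0 < σ ∧ σ < 1 then ENNReal.ofReal (1 - σ) else 0) • Measure.dirac 0 +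
  (if 0 < θ ∧ θ < 1 then ENNReal.ofReal (1 - θ) else 0) • Measure.dirac 1 +
  volume.withDensity (fun x =>
    ENNReal.ofReal (indicator (Ioo (xminus σ θ) (xplus σ θ))
      (fun x => (σ + θ) * Real.sqrt ((x - xminus σ θ) * (xplus σ θ - x)) /
        (2 * Real.pi * x * (1 - x))) x))

/-- Cauchy transform. -/
noncomputable def cauchyG (μ : Measure ℝ) (ζ : ℂ) : ℂ := ∫ x : ℝ, (ζ - (x : ℂ))⁻¹ ∂μ

lemma norm_inv_sub_le (ζ : ℂ) (h : ζ.im ≠ 0) (x : ℝ) : ‖(ζ - (x : ℂ))⁻¹‖ ≤ |ζ.im|⁻¹ := by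
  rw [norm_inv]
  apply inv_anti₀ (abs_pos.2 h)
  simpa using Complex.abs_im_le_norm (ζ - (x : ℂ))

lemma sub_ne_zero_of_im (ζ : ℂ) (h : ζ.im ≠ 0) (x : ℝ) : ζ - (x : ℂ) ≠ 0 := by
  intro h0
  apply h
  have := congrArg Complex.im h0
  simpa using this

lemma cauchy_integrable (μ : Measure ℝ) [IsProbabilityMeasure μ] (ζ : ℂ) (h : ζ.im ≠ 0) :
    Integrable (fun x : ℝ => (ζ - (x : ℂ))⁻¹) μ := by
  refine Integrable.of_bound (C := |ζ.im|⁻¹) ?_ ?_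
  · exact Measurable.aestronglyMeasurable (by fun_prop)
  · exact Filter.Eventually.of_forall fun x => norm_inv_sub_le ζ h x

lemma inv_sub_im (ζ : ℂ) (x : ℝ) :
    ((ζ - (x : ℂ))⁻¹).im = - (ζ.im / ((ζ.re - x) ^ 2 + ζ.im ^ 2)) := by
  rw [Complex.inv_im, Complex.normSq_apply]
  simp
  ring

lemma inv_sub_re (ζ : ℂ) (x : ℝ) :
    ((ζ - (x : ℂ))⁻¹).re = (ζ.re - x) / ((ζ.re - x) ^ 2 + ζ.im ^ 2) := by
  rw [Complex.inv_re, Complex.normSq_apply]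
  simp
  ring

lemma cauchyG_im (μ : Measure ℝ) [IsProbabilityMeasure μ] (ζ : ℂ) (h : ζ.im ≠ 0) :
    (cauchyG μ ζ).im = - ∫ x, ζ.im / ((ζ.re - x) ^ 2 + ζ.im ^ 2) ∂μ := by
  have := integral_im (cauchy_integrable μ ζ h)
  unfold cauchyG
  simp only [RCLike.im_to_complex] at this
  rw [← this, ← integral_neg]
  simp only [inv_sub_im]

lemma cauchyG_re (μ : Measure ℝ) [IsProbabilityMeasure μ] (ζ : ℂ) (h : ζ.im ≠ 0) :
    (cauchyG μ ζ).re = ∫ x, (ζ.re - x) / ((ζ.re - x) ^ 2 + ζ.im ^ 2) ∂μ := by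
  have := integral_re (cauchy_integrable μ ζ h)
  unfold cauchyG
  simp only [RCLike.re_to_complex] at this
  rw [← this]
  simp only [inv_sub_re]

/-- If the Cauchy transform has negative imaginary part, the argument is in the upper half plane. -/
lemma im_pos_of_cauchyG (μ : Measure ℝ) [IsProbabilityMeasure μ] (ζ : ℂ)
    (h : (cauchyG μ ζ).im < 0) : 0 < ζ.im := by
  by_contra hcon
  push Not at hcon
  rcases hcon.lt_or_eq with h1 | h1
  · rw [cauchyG_im μ ζ h1.ne] at h
    have : ∫ x, ζ.im / ((ζ.re - x) ^ 2 + ζ.im ^ 2) ∂μ ≤ 0 :=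
      integral_nonpos fun x => div_nonpos_of_nonpos_of_nonneg hcon (by positivity)
    linarith
  · by_cases hi : Integrable (fun x : ℝ => (ζ - (x : ℂ))⁻¹) μ
    · have := integral_im hi
      simp only [RCLike.im_to_complex, inv_sub_im, h1] at this
      unfold cauchyG at h
      simp at this
      linarith
    · unfold cauchyG at h
      rw [integral_undef hi] at h
      simp at h

lemma cauchyG_im_nonpos (μ : Measure ℝ) [IsProbabilityMeasure μ] (ζ : ℂ)
    (h : 0 < ζ.im) : (cauchyG μ ζ).im ≤ 0 := by
  rw [cauchyG_im μ ζ h.ne']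
  have : 0 ≤ ∫ x, ζ.im / ((ζ.re - x) ^ 2 + ζ.im ^ 2) ∂μ :=
    integral_nonneg fun x => by positivity
  linarith

lemma cauchyG_differentiableAt (μ : Measure ℝ) [IsProbabilityMeasure μ] (ζ : ℂ)
    (h : 0 < ζ.im) : DifferentiableAt ℂ (cauchyG μ) ζ := by
  have hs : {w : ℂ | ζ.im / 2 < w.im} ∈ nhds ζ :=
    (isOpen_lt continuous_const Complex.continuous_im).mem_nhds (by simp; linarith)
  have := hasDerivAt_integral_of_dominated_loc_of_deriv_le (μ := μ) (𝕜 := ℂ)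
    (F := fun (w : ℂ) (x : ℝ) => (w - (x : ℂ))⁻¹)
    (F' := fun (w : ℂ) (x : ℝ) => - 1 / (w - (x : ℂ)) ^ 2)
    (bound := fun _ => ((ζ.im / 2)⁻¹) ^ 2) (x₀ := ζ) hs
    (Filter.Eventually.of_forall fun w => Measurable.aestronglyMeasurable (by fun_prop))
    (cauchy_integrable μ ζ h.ne') (Measurable.aestronglyMeasurable (by fun_prop))
    (Filter.Eventually.of_forall fun x w hw => by
      have hw' : ζ.im / 2 < w.im := hw
      have hw0 : 0 < w.im := by linarith
      have h1 := norm_inv_sub_le w hw0.ne' x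
      rw [abs_of_pos hw0] at h1
      have h2 : (w.im)⁻¹ ≤ (ζ.im / 2)⁻¹ := inv_anti₀ (by linarith) hw'.le
      have : - 1 / (w - (x : ℂ)) ^ 2 = - ((w - (x : ℂ))⁻¹) ^ 2 := by
        rw [inv_pow, neg_div, one_div]
      rw [this, norm_neg, norm_pow]
      exact pow_le_pow_left₀ (norm_nonneg _) (h1.trans h2) 2)
    (integrable_const _)
    (Filter.Eventually.of_forall fun x w hw => by
      have hw' : ζ.im / 2 < w.im := hw
      have hw0 : 0 < w.im := by linarith
      exact ((hasDerivAt_id w).sub_const (x : ℂ)).inv (sub_ne_zero_of_im w hw0.ne' x))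
  exact this.2.differentiableAt

/-- Mass of an atom from the Cauchy transform. -/
lemma cauchyG_atom (μ : Measure ℝ) [IsProbabilityMeasure μ] (a : ℝ) :
    Filter.Tendsto (fun ε : ℝ => (ε * Complex.I) * cauchyG μ (a + ε * Complex.I))
      (nhdsWithin 0 (Ioi 0)) (nhds ((μ.real {a} : ℝ) : ℂ)) := by
  have e1 : ((μ.real {a} : ℝ) : ℂ) = ∫ x : ℝ, Set.indicator {a} (fun _ => (1 : ℂ)) x ∂μ := by
    rw [integral_indicator (measurableSet_singleton a)]
    simp
    rfl
  rw [e1]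
  unfold cauchyG
  simp_rw [← integral_const_mul]
  refine tendsto_integral_filter_of_dominated_convergence (fun _ => 1) ?_ ?_ (integrable_const _) ?_
  · exact Filter.Eventually.of_forall fun ε => Measurable.aestronglyMeasurable (by fun_prop)
  · filter_upwards [self_mem_nhdsWithin] with ε hε
    have hε : 0 < ε := hε
    refine Filter.Eventually.of_forall fun x => ?_
    have := norm_inv_sub_le (a + ε * Complex.I) (by simpa using hε.ne') x
    simp [abs_of_pos hε] at this
    rw [norm_mul, norm_mul]
    simp [abs_of_pos hε]
    calc _ ≤ ε * ε⁻¹ := by gcongr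
      _ = 1 := mul_inv_cancel₀ hε.ne'
  · refine Filter.Eventually.of_forall fun x => ?_
    by_cases hx : x = a
    · subst hx
      simp only [mem_singleton_iff, indicator_of_mem]
      refine tendsto_const_nhds.congr' ?_
      filter_upwards [self_mem_nhdsWithin] with ε hε
      have hε : 0 < ε := hε
      rw [add_sub_cancel_left, mul_inv_cancel₀]
      simp [hε.ne']
    · rw [indicator_of_notMem (by simpa using hx)]
      have hne : (a : ℂ) - x ≠ 0 := by
        rw [sub_ne_zero]; exact_mod_cast (Ne.symm hx)
      have : ContinuousAt (fun ε : ℝ => (ε * Complex.I) * (a + ε * Complex.I - (x : ℂ))⁻¹) 0 := by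
        apply ContinuousAt.mul (by fun_prop)
        apply ContinuousAt.inv₀ (by fun_prop)
        simpa using hne
      have h2 := this.tendsto
      simp only [Complex.ofReal_zero, zero_mul] at h2
      exact h2.mono_left nhdsWithin_le_nhds

/-- Stieltjes inversion. -/
lemma stieltjes_inversion (μ : Measure ℝ) [IsProbabilityMeasure μ] (f : ℝ → ℝ)
    (hf : Continuous f) (hc : HasCompactSupport f) :
    Filter.Tendsto (fun ε : ℝ => ∫ x, f x * (-(cauchyG μ (x + ε * Complex.I)).im))
      (nhdsWithin 0 (Ioi 0)) (nhds (Real.pi * ∫ x, f x ∂μ)) := by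
  obtain ⟨C, hC⟩ := hc.exists_bound_of_continuous hf
  have hC' : ∀ x, |f x| ≤ C := hC
  -- the integral on the product
  have key : ∀ ε : ℝ, 0 < ε → ∫ x, f x * (-(cauchyG μ (x + ε * Complex.I)).im)
      = ∫ q : ℝ × ℝ, f (q.1 + ε * q.2) * (1 + q.2 ^ 2)⁻¹ ∂(μ.prod volume) := by
    intro ε hε
    have h1 : ∀ x : ℝ, f x * (-(cauchyG μ (x + ε * Complex.I)).im)
        = ∫ t, f x * (ε / ((x - t) ^ 2 + ε ^ 2)) ∂μ := by
      intro x
      rw [cauchyG_im μ _ (by simpa using hε.ne'), integral_const_mul]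
      simp
    simp_rw [h1]
    rw [integral_integral_swap]
    · rw [integral_prod]
      · congr 1
        ext t
        have e2 := Measure.integral_comp_mul_left (fun y : ℝ => f (t + y) * (ε / (y ^ 2 + ε ^ 2))) ε
        have e3 : ∫ x, f x * (ε / ((x - t) ^ 2 + ε ^ 2))
            = ∫ y : ℝ, f (t + y) * (ε / (y ^ 2 + ε ^ 2)) := by
          rw [← integral_add_left_eq_self _ t]
          simp
        rw [e3]
        have e4 : ∫ y : ℝ, f (t + y) * (ε / (y ^ 2 + ε ^ 2)) =
            ε * ∫ x : ℝ, f (t + ε * x) * (ε / ((ε * x) ^ 2 + ε ^ 2)) := by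
          rw [e2, smul_eq_mul, abs_of_pos (inv_pos.2 hε), mul_inv_cancel_left₀ hε.ne']
        rw [e4, ← integral_const_mul]
        congr 1
        ext x
        have : 0 < 1 + x ^ 2 := by positivity
        field_simp
        ring
      · refine Integrable.mono' (g := fun q : ℝ × ℝ => (C : ℝ) * (1 + q.2 ^ 2)⁻¹) ?_ ?_ ?_
        · exact (integrable_inv_one_add_sq.comp_snd μ).const_mul C
        · refine Measurable.aestronglyMeasurable ?_
          have := hf.measurable
          fun_prop
        · refine Filter.Eventually.of_forall fun q => ?_
          rw [norm_mul, Real.norm_of_nonneg (by positivity : 0 ≤ (1 + q.2 ^ 2)⁻¹)]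
          gcongr
          exact hC _
    · have hfi : Integrable f := hf.integrable_of_hasCompactSupport hc
      refine Integrable.mono' (g := fun q : ℝ × ℝ => |f q.1| * ε⁻¹) ?_ ?_ ?_
      · exact (hfi.abs.comp_fst μ).mul_const _
      · refine Measurable.aestronglyMeasurable ?_
        have := hf.measurable
        unfold Function.uncurry
        fun_prop
      · refine Filter.Eventually.of_forall fun q => ?_
        simp only [Function.uncurry]
        rw [norm_mul, Real.norm_of_nonneg (by positivity : 0 ≤ ε / ((q.1 - q.2) ^ 2 + ε ^ 2))]
        gcongr
        · exact le_rfl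
        rw [div_le_iff₀ (by positivity)]
        have : ε⁻¹ * ε ^ 2 = ε := by field_simp
        have h3 : 0 ≤ ε⁻¹ * (q.1 - q.2) ^ 2 := by positivity
        nlinarith
  have lim : Filter.Tendsto (fun ε : ℝ => ∫ q : ℝ × ℝ, f (q.1 + ε * q.2) * (1 + q.2 ^ 2)⁻¹
      ∂(μ.prod volume)) (nhdsWithin 0 (Ioi 0))
      (nhds (∫ q : ℝ × ℝ, f q.1 * (1 + q.2 ^ 2)⁻¹ ∂(μ.prod volume))) := by
    refine tendsto_integral_filter_of_dominated_convergence
      (fun q : ℝ × ℝ => (C : ℝ) * (1 + q.2 ^ 2)⁻¹) ?_ ?_ ?_ ?_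
    · refine Filter.Eventually.of_forall fun ε => Measurable.aestronglyMeasurable ?_
      have := hf.measurable
      fun_prop
    · refine Filter.Eventually.of_forall fun ε => Filter.Eventually.of_forall fun q => ?_
      rw [norm_mul, Real.norm_of_nonneg (by positivity : 0 ≤ (1 + q.2 ^ 2)⁻¹)]
      gcongr
      exact hC _
    · exact (integrable_inv_one_add_sq.comp_snd μ).const_mul C
    · refine Filter.Eventually.of_forall fun q => ?_
      have : Continuous (fun ε : ℝ => f (q.1 + ε * q.2) * (1 + q.2 ^ 2)⁻¹) := by fun_prop
      have h2 := this.tendsto 0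
      simp only [zero_mul, add_zero] at h2
      exact h2.mono_left nhdsWithin_le_nhds
  have e : ∫ q : ℝ × ℝ, f q.1 * (1 + q.2 ^ 2)⁻¹ ∂(μ.prod volume) = Real.pi * ∫ x, f x ∂μ := by
    rw [integral_prod_mul (fun x => f x) (fun y : ℝ => (1 + y ^ 2)⁻¹),
      integral_univ_inv_one_add_sq, mul_comm]
  rw [e] at lim
  refine lim.congr' ?_
  filter_upwards [self_mem_nhdsWithin] with ε hε
  exact (key ε hε).symm

/-- The explicit curve on which the functional equation is known. -/
noncomputable def fbCurve (n : ℕ) (p : ℝ) (y : ℝ) : ℂ :=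
  let z : ℂ := -(y * Complex.I)
  ((n : ℂ) * ((1 + z / n + ((1 + z / n) ^ 2 - 4 * p * z / n) ^ (2⁻¹ : ℂ)) / 2) - (n - 1)) / z

lemma fbCurve_continuousAt (n : ℕ) (hn : 2 ≤ n) (p : ℝ) (y : ℝ) (hy : 0 < y) (hy1 : y < 1) :
    ContinuousAt (fbCurve n p) y := by
  have hn0 : (0 : ℝ) < n := by positivity
  have hn1 : (2 : ℝ) ≤ n := by exact_mod_cast hn
  unfold fbCurve
  apply ContinuousAt.div
  · apply ContinuousAt.sub _ (by fun_prop)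
    apply ContinuousAt.mul (by fun_prop)
    apply ContinuousAt.div_const
    apply ContinuousAt.add (by fun_prop)
    apply ContinuousAt.cpow (by fun_prop) (by fun_prop)
    left
    have e : ((1 + -(y * Complex.I) / (n : ℂ)) ^ 2 - 4 * p * -(y * Complex.I) / n)
        = ((1 - (y / n) ^ 2 : ℝ) : ℂ) + ((4 * p * y / n - 2 * y / n : ℝ) : ℂ) * Complex.I := by
      push_cast
      linear_combination (y / n : ℂ) ^ 2 * Complex.I_sq
    rw [e, Complex.add_re, Complex.re_ofReal_mul, Complex.ofReal_re, Complex.I_re, mul_zero,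
      add_zero]
    have : y / n < 1 := by rw [div_lt_one hn0]; linarith
    have : 0 < y / n := by positivity
    nlinarith
  · fun_prop
  · simp [hy.ne']

lemma fb_pointwise (n : ℕ) (hn : 2 ≤ n) (p : ℝ) (hp : 0 < p) (hp1 : p < 1)
    (μ : Measure ℝ) [IsProbabilityMeasure μ] (y : ℝ) (hy : 0 < y) (z r : ℂ)
    (hz : z = -(y * Complex.I))
    (hν : ∫ x, (r + z⁻¹ - (x : ℂ))⁻¹
        ∂(ENNReal.ofReal p • Measure.dirac (0 : ℝ) +
          ENNReal.ofReal (1 - p) • Measure.dirac ((n : ℝ)⁻¹)) = z)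
    (hμ : ∫ x, ((n : ℂ) * r + z⁻¹ - (x : ℂ))⁻¹ ∂μ = z) :
    0 < (fbCurve n p y).im ∧ cauchyG μ (fbCurve n p y) = z ∧
      z ^ 2 * (fbCurve n p y * (fbCurve n p y - 1)) +
        z * ((n - 2) * fbCurve n p y + (1 - n * (1 - p))) - (n - 1) = 0 := by
  have hn0 : (n : ℂ) ≠ 0 := by
    have : n ≠ 0 := by omega
    exact_mod_cast this
  have hn0' : (0 : ℝ) < n := by positivity
  have hn2 : (2 : ℝ) ≤ n := by exact_mod_cast hn
  have hz0 : z ≠ 0 := by simp [hz, hy.ne']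
  have hzim : z.im = -y := by simp [hz]
  have hzre : z.re = 0 := by simp [hz]
  rw [integral_add_measure, integral_smul_measure, integral_smul_measure, integral_dirac,
    integral_dirac, ENNReal.toReal_ofReal hp.le, ENNReal.toReal_ofReal (by linarith)] at hν
  rotate_left
  · exact (integrable_dirac (by simp)).smul_measure (by simp)
  · exact (integrable_dirac (by simp)).smul_measure (by simp)
  simp only [Complex.real_smul] at hν
  obtain ⟨w, hw⟩ : ∃ w, w = r + z⁻¹ := ⟨_, rfl⟩
  rw [← hw] at hν
  have hw0 : w ≠ 0 := by
    intro h
    rw [h] at hν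
    have := congrArg Complex.im hν
    rw [hzim] at this
    have e : (p : ℂ) * (0 - ((0 : ℝ) : ℂ))⁻¹ + ((1 - p : ℝ) : ℂ) * (0 - (((n : ℝ)⁻¹ : ℝ) : ℂ))⁻¹
      = ((p * (0 - 0)⁻¹ + (1 - p) * (0 - (n : ℝ)⁻¹)⁻¹ : ℝ) : ℂ) := by push_cast; rfl
    rw [e, Complex.ofReal_im] at this
    linarith
  have hw1 : w - (n : ℂ)⁻¹ ≠ 0 := by
    intro h
    rw [sub_eq_zero] at h
    rw [h] at hν
    have := congrArg Complex.im hν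
    rw [hzim] at this
    have e : (p : ℂ) * ((n : ℂ)⁻¹ - ((0 : ℝ) : ℂ))⁻¹ +
        ((1 - p : ℝ) : ℂ) * ((n : ℂ)⁻¹ - (((n : ℝ)⁻¹ : ℝ) : ℂ))⁻¹
      = ((p * ((n : ℝ)⁻¹ - 0)⁻¹ + (1 - p) * ((n : ℝ)⁻¹ - (n : ℝ)⁻¹)⁻¹ : ℝ) : ℂ) := by
      push_cast; rfl
    rw [e, Complex.ofReal_im] at this
    linarith
  have hquad : z * w * (w - (n : ℂ)⁻¹) = w - p * (n : ℂ)⁻¹ := by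
    rw [← hν]
    push_cast
    rw [sub_zero]
    have : (p * w⁻¹ + (1 - p) * (w - (n : ℂ)⁻¹)⁻¹) * w * (w - (n : ℂ)⁻¹)
      = p * (w⁻¹ * w) * (w - (n : ℂ)⁻¹) + (1 - p) * w * ((w - (n : ℂ)⁻¹)⁻¹ * (w - (n : ℂ)⁻¹)) := by
      ring
    rw [this, inv_mul_cancel₀ hw0, inv_mul_cancel₀ hw1]
    ring
  obtain ⟨ζ, hζ⟩ : ∃ ζ, ζ = (n : ℂ) * r + z⁻¹ := ⟨_, rfl⟩
  rw [← hζ] at hμ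
  have hG : cauchyG μ ζ = z := hμ
  have him : 0 < ζ.im := im_pos_of_cauchyG μ ζ (by rw [hG, hzim]; linarith)
  have hζz : ζ * z = n * (w * z) - (n - 1) := by
    have : r = w - z⁻¹ := by rw [hw]; ring
    rw [hζ, this]
    field_simp
    ring
  have hre : 0 < (2 * (w * z) - 1 - z / n).re := by
    have h1 := congrArg Complex.re hζz
    have h2 : (ζ * z).re = ζ.im * y := by simp [Complex.mul_re, hzre, hzim]
    have h3 : ((n : ℂ) * (w * z) - (n - 1)).re = n * (w * z).re - (n - 1) := by
      rw [← Complex.ofReal_natCast, Complex.sub_re, Complex.re_ofReal_mul]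
      simp
    rw [h2, h3] at h1
    have h4 : (2 * (w * z) - 1 - z / n).re = 2 * (w * z).re - 1 := by
      rw [← Complex.ofReal_natCast, Complex.sub_re, Complex.div_ofReal_re, hzre, Complex.sub_re]
      simp [Complex.mul_re]
    rw [h4]
    have h5 : 0 < ζ.im * y := by positivity
    by_contra hcon
    push Not at hcon
    nlinarith
  have hsq : (2 * (w * z) - 1 - z / n) ^ 2 = (1 + z / n) ^ 2 - 4 * p * z / n := by
    linear_combination 4 * z * hquad
  have hs : ((1 + z / n) ^ 2 - 4 * p * z / n) ^ (2⁻¹ : ℂ) = 2 * (w * z) - 1 - z / n := by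
    rw [← hsq]
    exact Complex.sq_cpow_two_inv hre
  have hcurve : fbCurve n p y = ζ := by
    unfold fbCurve
    simp only [← hz]
    rw [hs, div_eq_iff hz0, hζz]
    ring
  rw [hcurve]
  refine ⟨him, hG, ?_⟩
  have hq2 : (n * (w * z)) * (n * (w * z) - z) = n * (n * (w * z) - p * z) := by
    have : (n : ℂ) * (n : ℂ)⁻¹ = 1 := mul_inv_cancel₀ hn0
    linear_combination (n : ℂ) ^ 2 * z * hquad + (n * w * z^2 - p * n * z) * this
  have h6 : (n : ℂ) * (w * z) = ζ * z + (n - 1) := by rw [hζz]; ring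
  have h7 : (n : ℂ) * (n * (w * z) - p * z) = n * ((ζ * z + (n - 1)) - p * z) := by rw [h6]
  rw [h7, h6] at hq2
  linear_combination hq2

/-- The functional equation holds on the whole upper half plane. -/
lemma fb_quadratic (n : ℕ) (hn : 2 ≤ n)
    (p : ℝ) (hp : 0 < p) (hp1 : p < 1)
    (μ : Measure ℝ) [IsProbabilityMeasure μ] (rν : ℂ → ℂ)
    (hrν : ∀ᶠ z in nhdsWithin (0 : ℂ) {z | z ≠ 0},
      ∫ x, (rν z + z⁻¹ - (x : ℂ))⁻¹
        ∂(ENNReal.ofReal p • Measure.dirac (0 : ℝ) +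
          ENNReal.ofReal (1 - p) • Measure.dirac ((n : ℝ)⁻¹)) = z)
    (hrμ : ∀ᶠ z in nhdsWithin (0 : ℂ) {z | z ≠ 0},
      ∫ x, ((n : ℂ) * rν z + z⁻¹ - (x : ℂ))⁻¹ ∂μ = z) (ζ : ℂ) (hζ : 0 < ζ.im) :
    cauchyG μ ζ ^ 2 * (ζ * (ζ - 1)) +
        cauchyG μ ζ * ((n - 2) * ζ + (1 - n * (1 - p))) - (n - 1) = 0 := by
  have hev := hrν.and hrμ
  rw [eventually_nhdsWithin_iff, Metric.eventually_nhds_iff] at hev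
  obtain ⟨δ, hδ, hev⟩ := hev
  have hpt : ∀ y : ℝ, 0 < y → y < δ → _ := fun y hy hyδ =>
    have h := hev (y := -(y * Complex.I)) (by simpa [abs_of_pos hy] using hyδ)
      (by simp [hy.ne'])
    fb_pointwise n hn p hp hp1 μ y hy _ _ rfl h.1 h.2
  obtain ⟨y0, hy0, hy0δ, hy01⟩ : ∃ y0 : ℝ, 0 < y0 ∧ y0 < δ ∧ y0 < 1 :=
    ⟨min δ 1 / 2, by positivity, by have := min_le_left δ 1; have : 0 < min δ 1 := by positivity
                                    linarith [min_le_left δ 1],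
      by have : 0 < min δ 1 := by positivity
         linarith [min_le_right δ 1]⟩
  have hnear : ∀ᶠ y in nhdsWithin y0 {y0}ᶜ, 0 < y ∧ y < δ ∧ y ≠ y0 := by
    have h1 : ∀ᶠ y in nhds y0, y ∈ Ioo 0 δ := Ioo_mem_nhds hy0 hy0δ
    filter_upwards [h1.filter_mono nhdsWithin_le_nhds, self_mem_nhdsWithin] with y hy hy'
    exact ⟨hy.1, hy.2, hy'⟩
  have htend : Filter.Tendsto (fbCurve n p) (nhdsWithin y0 {y0}ᶜ)
      (nhdsWithin (fbCurve n p y0) {fbCurve n p y0}ᶜ) := by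
    refine tendsto_nhdsWithin_iff.2
      ⟨(fbCurve_continuousAt n hn p y0 hy0 hy01).tendsto.mono_left nhdsWithin_le_nhds, ?_⟩
    filter_upwards [hnear] with y hy heq
    have heq : fbCurve n p y = fbCurve n p y0 := heq
    have h1 := (hpt y hy.1 hy.2.1).2.1
    have h2 := (hpt y0 hy0 hy0δ).2.1
    rw [heq, h2] at h1
    apply hy.2.2
    have := congrArg Complex.im h1
    simpa using this.symm
  have hU : IsOpen {w : ℂ | 0 < w.im} := isOpen_lt continuous_const Complex.continuous_im
  have hd : DifferentiableOn ℂ (fun ζ => cauchyG μ ζ ^ 2 * (ζ * (ζ - 1)) +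
        cauchyG μ ζ * ((n - 2) * ζ + (1 - n * (1 - p))) - (n - 1)) {w : ℂ | 0 < w.im} := by
    intro w hw
    have := cauchyG_differentiableAt μ w hw
    apply DifferentiableAt.differentiableWithinAt
    fun_prop
  have ha := hd.analyticOnNhd hU
  have hconn : IsPreconnected {w : ℂ | 0 < w.im} := (convex_halfSpace_im_gt 0).isPreconnected
  refine ha.eqOn_zero_of_preconnected_of_frequently_eq_zero hconn
    (z₀ := fbCurve n p y0) (hpt y0 hy0 hy0δ).1 ?_ hζ
  refine htend.frequently (Filter.Eventually.frequently ?_)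
  filter_upwards [hnear] with y hy
  have h := hpt y hy.1 hy.2.1
  rw [h.2.1]
  exact h.2.2

/-- `A(ζ) = ζ(ζ-1)`, `B(ζ) = (N-2)ζ + c`: the discriminant. -/
noncomputable def fbDisc (N c : ℝ) (ζ : ℂ) : ℂ :=
  ((N - 2) * ζ + c) ^ 2 + 4 * (N - 1) * (ζ * (ζ - 1))

noncomputable def fbPhi (N c : ℝ) (ζ : ℂ) : ℝ :=
  (1 + ‖fbDisc N c ζ‖ + ‖(N - 2) * ζ + c‖) / 2

lemma fbDisc_continuous (N c : ℝ) : Continuous (fbDisc N c) := by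
  unfold fbDisc; fun_prop

lemma fbPhi_continuous (N c : ℝ) : Continuous (fbPhi N c) := by
  have := fbDisc_continuous N c
  unfold fbPhi; fun_prop

lemma fb_sq {N c : ℝ} {ζ g : ℂ}
    (H : g ^ 2 * (ζ * (ζ - 1)) + g * ((N - 2) * ζ + c) - (N - 1) = 0) :
    (2 * (ζ * (ζ - 1)) * g + ((N - 2) * ζ + c)) ^ 2 = fbDisc N c ζ := by
  unfold fbDisc
  linear_combination 4 * (ζ * (ζ - 1)) * H

lemma fb_norm_le {N c : ℝ} {ζ g : ℂ}
    (H : g ^ 2 * (ζ * (ζ - 1)) + g * ((N - 2) * ζ + c) - (N - 1) = 0) :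
    ‖ζ * (ζ - 1) * g‖ ≤ fbPhi N c ζ := by
  have h1 := fb_sq H
  set h := 2 * (ζ * (ζ - 1)) * g + ((N - 2) * ζ + c) with hh
  have h2 : ζ * (ζ - 1) * g = (h - ((N - 2) * ζ + c)) / 2 := by rw [hh]; ring
  have h3 : ‖h‖ ≤ 1 + ‖fbDisc N c ζ‖ := by
    rw [← h1, norm_pow]
    nlinarith [sq_nonneg (‖h‖ - 1)]
  rw [h2, norm_div]
  unfold fbPhi
  have h4 := norm_sub_le h ((N - 2) * ζ + c)
  simp only [Complex.norm_ofNat]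
  linarith

lemma fb_weight_le {N c : ℝ} {x ε : ℝ} {g : ℂ}
    (H : g ^ 2 * ((x + ε * Complex.I) * ((x + ε * Complex.I) - 1)) +
      g * ((N - 2) * (x + ε * Complex.I) + c) - (N - 1) = 0) :
    |x * (x - 1)| * ‖g‖ ≤ fbPhi N c (x + ε * Complex.I) := by
  refine le_trans ?_ (fb_norm_le H)
  rw [norm_mul, norm_mul, abs_mul]
  have h1 := Complex.abs_re_le_norm (x + ε * Complex.I : ℂ)
  have h2 := Complex.abs_re_le_norm (x + ε * Complex.I - 1 : ℂ)
  simp at h1 h2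
  gcongr

lemma abs_im_eq_sqrt (h : ℂ) : |h.im| = Real.sqrt ((‖h ^ 2‖ - (h ^ 2).re) / 2) := by
  rw [norm_pow, Complex.sq_norm, Complex.normSq_apply, sq h, Complex.mul_re]
  rw [← Real.sqrt_sq_eq_abs]
  congr 1
  ring

lemma fb_pointwise_limit (N c : ℝ) (x : ℝ) (hx0 : x ≠ 0) (hx1 : x ≠ 1) (G : ℂ → ℂ)
    (hG : ∀ ζ : ℂ, 0 < ζ.im → (G ζ).im ≤ 0)
    (H : ∀ ζ : ℂ, 0 < ζ.im →
      G ζ ^ 2 * (ζ * (ζ - 1)) + G ζ * ((N - 2) * ζ + c) - (N - 1) = 0) :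
    Filter.Tendsto (fun ε : ℝ => |x * (x - 1)| * (-(G (x + ε * Complex.I)).im))
      (nhdsWithin 0 (Ioi 0))
      (nhds (Real.sqrt (-(((N - 2) * x + c) ^ 2 + 4 * (N - 1) * (x * (x - 1)))) / 2)) := by
  set d : ℝ := ((N - 2) * x + c) ^ 2 + 4 * (N - 1) * (x * (x - 1)) with hd
  have hdisc : fbDisc N c x = (d : ℂ) := by
    unfold fbDisc; rw [hd]; push_cast; ring
  have hxx : 0 < |x * (x - 1)| := abs_pos.2 (mul_ne_zero hx0 (sub_ne_zero.2 hx1))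
  let Z : ℝ → ℂ := fun ε => x + ε * Complex.I
  have hZ : Continuous Z := by fun_prop
  have hZ0 : Z 0 = x := by simp [Z]
  have hZim : ∀ ε, (Z ε).im = ε := by intro ε; simp [Z]
  let h : ℝ → ℂ := fun ε => 2 * (Z ε * (Z ε - 1)) * G (Z ε) + ((N - 2) * Z ε + c)
  have hlim : Filter.Tendsto (fun ε => |(h ε).im| / 2) (nhdsWithin 0 (Ioi 0))
      (nhds (Real.sqrt (-d) / 2)) := by
    have hc : Continuous (fun ε => Real.sqrt ((‖fbDisc N c (Z ε)‖ - (fbDisc N c (Z ε)).re) / 2) / 2) := by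
      have h1 := (fbDisc_continuous N c).comp hZ
      simp only [Function.comp_def] at h1
      fun_prop
    have h2 := (hc.tendsto 0).mono_left (nhdsWithin_le_nhds (s := Ioi (0 : ℝ)))
    rw [hZ0, hdisc] at h2
    have h3 : Real.sqrt ((‖(d : ℂ)‖ - ((d : ℂ)).re) / 2) = Real.sqrt (-d) := by
      rw [Complex.norm_real, Complex.ofReal_re, Real.norm_eq_abs]
      rcases le_total 0 d with h | h
      · rw [abs_of_nonneg h, Real.sqrt_eq_zero_of_nonpos (by linarith : -d ≤ 0)]
        simp
      · rw [abs_of_nonpos h]; congr 1; ring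
    rw [h3] at h2
    refine h2.congr' ?_
    filter_upwards [self_mem_nhdsWithin] with ε hε
    have hε : 0 < ε := hε
    rw [abs_im_eq_sqrt, fb_sq (H (Z ε) (by rw [hZim]; exact hε))]
  -- error term
  let M : ℝ → ℝ := fun ε => fbPhi N c (Z ε) / |x * (x - 1)|
  have hM : Continuous M := by
    have h1 := (fbPhi_continuous N c).comp hZ
    simp only [Function.comp_def] at h1
    fun_prop
  have herr : Filter.Tendsto (fun ε => ε * (ε * M ε + |N - 2| / 2 + |2 * x - 1| * M ε))
      (nhdsWithin 0 (Ioi 0)) (nhds 0) := by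
    have hc : Continuous (fun ε => ε * (ε * M ε + |N - 2| / 2 + |2 * x - 1| * M ε)) := by fun_prop
    have h2 := (hc.tendsto 0).mono_left (nhdsWithin_le_nhds (s := Ioi (0 : ℝ)))
    simpa using h2
  have hdiff : Filter.Tendsto (fun ε => |x * (x - 1)| * (-(G (Z ε)).im) - |(h ε).im| / 2)
      (nhdsWithin 0 (Ioi 0)) (nhds 0) := by
    refine squeeze_zero_norm' ?_ herr
    filter_upwards [self_mem_nhdsWithin] with ε hε
    have hε : 0 < ε := hε
    have hε' : 0 < (Z ε).im := by rw [hZim]; exact hε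
    have hgM : ‖G (Z ε)‖ ≤ M ε := by
      rw [le_div_iff₀ hxx, mul_comm]
      exact fb_weight_le (H (Z ε) hε')
    have hre := (Complex.abs_re_le_norm (G (Z ε))).trans hgM
    have him := (Complex.abs_im_le_norm (G (Z ε))).trans hgM
    have e1 : |x * (x - 1)| * (-(G (Z ε)).im) = |x * (x - 1) * (G (Z ε)).im| := by
      rw [abs_mul _ (G (Z ε)).im, abs_of_nonpos (hG _ hε')]
    have e2 : |(h ε).im| / 2 = |(h ε).im / 2| := by rw [abs_div]; simp
    have e3 : x * (x - 1) * (G (Z ε)).im - (h ε).im / 2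
        = ε * (ε * (G (Z ε)).im) + (ε * (-((N - 2) / 2)) + ε * (-((2 * x - 1) * (G (Z ε)).re))) := by
      have : (h ε).im = 2 * ((x * (x - 1) - ε ^ 2) * (G (Z ε)).im + ε * (2 * x - 1) * (G (Z ε)).re)
          + (N - 2) * ε := by
        have hz : h ε = 2 * (((x * (x - 1) - ε ^ 2 : ℝ) : ℂ) + ((ε * (2 * x - 1) : ℝ) : ℂ) * Complex.I)
            * G (Z ε) + (((N - 2) * x + c : ℝ) : ℂ) + (((N - 2) * ε : ℝ) : ℂ) * Complex.I := by
          simp only [h, Z]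
          push_cast
          linear_combination (2 * ε ^ 2 * G (x + ε * Complex.I)) * Complex.I_sq
        rw [hz]
        generalize G (Z ε) = g
        have h2 : ((2 : ℝ) : ℂ) = 2 := by norm_num
        rw [← h2]
        simp only [Complex.add_im, Complex.mul_im, Complex.mul_re, Complex.add_re,
          Complex.ofReal_re, Complex.ofReal_im, Complex.I_re, Complex.I_im]
        ring
      rw [this]; ring
    rw [e1, e2, Real.norm_eq_abs]
    refine (abs_abs_sub_abs_le _ _).trans ?_
    rw [e3]
    refine (abs_add_le _ _).trans ?_
    refine (add_le_add_right (abs_add_le _ _) _).trans ?_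
    rw [abs_mul, abs_mul, abs_mul, abs_mul, abs_neg, abs_neg, abs_mul, abs_div, abs_of_pos hε]
    simp only [abs_two]
    have h5 : ε * |(G (Z ε)).im| ≤ ε * M ε := by gcongr
    have h6 : |2 * x - 1| * |(G (Z ε)).re| ≤ |2 * x - 1| * M ε := by gcongr
    nlinarith
  have := hdiff.add hlim
  simpa [Z] using this

lemma fb_weak (N c : ℝ) (μ : Measure ℝ) [IsProbabilityMeasure μ]
    (H : ∀ ζ : ℂ, 0 < ζ.im →
      cauchyG μ ζ ^ 2 * (ζ * (ζ - 1)) + cauchyG μ ζ * ((N - 2) * ζ + c) - (N - 1) = 0)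
    (f : ℝ → ℝ) (hf : Continuous f) (hc : HasCompactSupport f) :
    ∫ x, f x * |x * (x - 1)| ∂μ =
      ∫ x, f x * (Real.sqrt (-(((N - 2) * x + c) ^ 2 + 4 * (N - 1) * (x * (x - 1))))
        / (2 * Real.pi)) := by
  have h1 := stieltjes_inversion μ (fun x => f x * |x * (x - 1)|) (by fun_prop) (hc.mul_right)
  have h2 : Filter.Tendsto
      (fun ε : ℝ => ∫ x, f x * |x * (x - 1)| * (-(cauchyG μ (x + ε * Complex.I)).im))
      (nhdsWithin 0 (Ioi 0)) (nhds (∫ x, f x *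
        (Real.sqrt (-(((N - 2) * x + c) ^ 2 + 4 * (N - 1) * (x * (x - 1)))) / 2))) := by
    have hcont : Continuous (fun q : ℝ × ℝ => fbPhi N c (q.1 + q.2 * Complex.I)) := by
      have := fbPhi_continuous N c
      fun_prop
    have hK : IsCompact (tsupport f ×ˢ Icc (0 : ℝ) 1) := hc.isCompact.prod isCompact_Icc
    obtain ⟨K, hKb⟩ := hK.exists_bound_of_continuousOn hcont.continuousOn
    refine tendsto_integral_filter_of_dominated_convergence (fun x => |f x| * K) ?_ ?_ ?_ ?_
    · filter_upwards [self_mem_nhdsWithin] with ε hε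
      have hε : 0 < ε := hε
      have : Continuous (fun x : ℝ => cauchyG μ (x + ε * Complex.I)) := by
        rw [continuous_iff_continuousAt]
        intro x
        have h1 := (cauchyG_differentiableAt μ (x + ε * Complex.I) (by simpa using hε)).continuousAt
        exact ContinuousAt.comp (f := fun x : ℝ => (x + ε * Complex.I : ℂ)) h1 (by fun_prop)
      apply Continuous.aestronglyMeasurable
      fun_prop
    · have hmem : ∀ᶠ ε in nhdsWithin (0 : ℝ) (Ioi 0), ε ∈ Ioo (0 : ℝ) 1 :=
        Ioo_mem_nhdsGT one_pos
      filter_upwards [hmem] with ε hε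
      refine Filter.Eventually.of_forall fun x => ?_
      by_cases hx : f x = 0
      · simp [hx]
      have hxs : x ∈ tsupport f := subset_tsupport f hx
      have hb := hKb (x, ε) ⟨hxs, hε.1.le, hε.2.le⟩
      have hw := fb_weight_le (H (x + ε * Complex.I) (by simpa using hε.1))
      rw [mul_assoc, norm_mul, norm_mul, norm_neg, Real.norm_eq_abs, Real.norm_eq_abs,
        Real.norm_eq_abs, abs_abs]
      gcongr
      calc _ ≤ |x * (x - 1)| * ‖cauchyG μ (x + ε * Complex.I)‖ := by
            gcongr; exact Complex.abs_im_le_norm _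
        _ ≤ _ := hw
        _ ≤ _ := (le_abs_self _).trans hb
    · exact (hf.integrable_of_hasCompactSupport hc).abs.mul_const K
    · have hae : ∀ᵐ x : ℝ, x ≠ 0 ∧ x ≠ 1 := by
        have h0 : ∀ᵐ x : ℝ, x ≠ 0 := Measure.ae_ne volume 0
        have h1 : ∀ᵐ x : ℝ, x ≠ 1 := Measure.ae_ne volume 1
        exact h0.and h1
      filter_upwards [hae] with x hx
      have := (fb_pointwise_limit N c x hx.1 hx.2 (cauchyG μ)
        (fun ζ hζ => cauchyG_im_nonpos μ ζ hζ) H).const_mul (f x)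
      simpa only [mul_assoc] using this
  have h3 := tendsto_nhds_unique h1 h2
  have hpi := Real.pi_pos
  have h4 : ∫ x, f x * (Real.sqrt (-(((N - 2) * x + c) ^ 2 + 4 * (N - 1) * (x * (x - 1))))
        / (2 * Real.pi)) = Real.pi⁻¹ * ∫ x, f x *
        (Real.sqrt (-(((N - 2) * x + c) ^ 2 + 4 * (N - 1) * (x * (x - 1)))) / 2) := by
    rw [← integral_const_mul]
    congr 1; ext x
    field_simp
  rw [h4, ← h3, inv_mul_cancel_left₀ hpi.ne']

lemma fb_withDensity (N c : ℝ) (μ : Measure ℝ) [IsProbabilityMeasure μ]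
    (H : ∀ ζ : ℂ, 0 < ζ.im →
      cauchyG μ ζ ^ 2 * (ζ * (ζ - 1)) + cauchyG μ ζ * ((N - 2) * ζ + c) - (N - 1) = 0) :
    μ.withDensity (fun x => ENNReal.ofReal |x * (x - 1)|) =
      volume.withDensity (fun x => ENNReal.ofReal
        (Real.sqrt (-(((N - 2) * x + c) ^ 2 + 4 * (N - 1) * (x * (x - 1)))) / (2 * Real.pi))) := by
  have hc1 : Continuous (fun x : ℝ => |x * (x - 1)|) := by fun_prop
  have hc2 : Continuous (fun x : ℝ => Real.sqrt
      (-(((N - 2) * x + c) ^ 2 + 4 * (N - 1) * (x * (x - 1)))) / (2 * Real.pi)) := by fun_prop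
  have i1 := IsLocallyFiniteMeasure.withDensity_ofReal (μ := μ) hc1
  have i2 := IsLocallyFiniteMeasure.withDensity_ofReal (μ := (volume : Measure ℝ)) hc2
  apply Measure.ext_of_integral_eq_on_compactlySupported
  intro f
  rw [integral_withDensity_eq_integral_toReal_smul (by fun_prop)
      (Filter.Eventually.of_forall fun x => ENNReal.ofReal_lt_top),
    integral_withDensity_eq_integral_toReal_smul (by fun_prop)
      (Filter.Eventually.of_forall fun x => ENNReal.ofReal_lt_top)]
  have h := fb_weak N c μ H f f.continuous f.hasCompactSupport
  have e1 : ∀ x : ℝ, (ENNReal.ofReal |x * (x - 1)|).toReal • f x = f x * |x * (x - 1)| := by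
    intro x
    rw [ENNReal.toReal_ofReal (abs_nonneg _), smul_eq_mul, mul_comm]
  simp_rw [e1]
  rw [h]
  congr 1; ext x
  rw [ENNReal.toReal_ofReal (by have := Real.pi_pos; positivity), smul_eq_mul, mul_comm]

lemma fb_endpoints (n : ℕ) (hn : 2 ≤ n) (p : ℝ) (hp : 0 < p) (hp1 : p < 1) (σ θ : ℝ)
    (hσ : σ = n * (1 - p)) (hθ : θ = n * p) :
    0 ≤ xminus σ θ ∧ xminus σ θ ≤ xplus σ θ ∧ xplus σ θ ≤ 1 ∧
    ∀ x : ℝ, -((((n : ℝ) - 2) * x + (1 - σ)) ^ 2 + 4 * ((n : ℝ) - 1) * (x * (x - 1))) =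
      (n : ℝ) ^ 2 * ((x - xminus σ θ) * (xplus σ θ - x)) := by
  have hn2 : (2 : ℝ) ≤ n := by exact_mod_cast hn
  have hn0 : (0 : ℝ) < n := by linarith
  have hs : σ + θ = n := by rw [hσ, hθ]; ring
  have ha : σ / n * (1 - 1 / n) = (1 - p) * (1 - 1 / n) := by
    rw [hσ]; field_simp
  have hb : 1 / n * (1 - σ / n) = p / n := by
    rw [hσ]; field_simp; ring
  have hinv : (1 : ℝ) / n ≤ 1 := by rw [div_le_one hn0]; linarith
  have ha0 : 0 ≤ (1 - p) * (1 - 1 / (n : ℝ)) := mul_nonneg (by linarith) (by linarith)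
  have hb0 : 0 ≤ p / (n : ℝ) := by positivity
  unfold xminus xplus
  rw [hs, ha, hb]
  have sa := Real.sq_sqrt ha0
  have sb := Real.sq_sqrt hb0
  have na := Real.sqrt_nonneg ((1 - p) * (1 - 1 / (n : ℝ)))
  have nb := Real.sqrt_nonneg (p / (n : ℝ))
  have hab : Real.sqrt ((1 - p) * (1 - 1 / (n : ℝ))) + Real.sqrt (p / (n : ℝ)) ≤ 1 := by
    have h1 : Real.sqrt ((1 - p) * (1 - 1 / (n : ℝ))) ≤ ((1 - p) + (1 - 1 / (n : ℝ))) / 2 := by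
      apply Real.sqrt_le_iff.2
      refine ⟨by linarith, ?_⟩
      nlinarith [sq_nonneg ((1 - p) - (1 - 1 / (n : ℝ)))]
    have h2 : Real.sqrt (p / (n : ℝ)) ≤ (p + 1 / (n : ℝ)) / 2 := by
      apply Real.sqrt_le_iff.2
      refine ⟨by positivity, ?_⟩
      have : p / (n : ℝ) = p * (1 / n) := by ring
      rw [this]
      nlinarith [sq_nonneg (p - 1 / (n : ℝ))]
    linarith
  generalize Real.sqrt ((1 - p) * (1 - 1 / (n : ℝ))) = u at *
  generalize Real.sqrt (p / (n : ℝ)) = v at *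
  refine ⟨sq_nonneg _, by nlinarith, by nlinarith, fun x => ?_⟩
  have e1 : (x - (u - v) ^ 2) * ((u + v) ^ 2 - x)
      = - x ^ 2 + 2 * (u ^ 2 + v ^ 2) * x - (u ^ 2 - v ^ 2) ^ 2 := by ring
  rw [e1, sa, sb, hσ]
  field_simp
  ring

lemma fb_restrict (n : ℕ) (hn : 2 ≤ n) (p : ℝ) (hp : 0 < p) (hp1 : p < 1) (σ θ : ℝ)
    (hσ : σ = n * (1 - p)) (hθ : θ = n * p) (μ : Measure ℝ) [IsProbabilityMeasure μ]
    (H : ∀ ζ : ℂ, 0 < ζ.im →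
      cauchyG μ ζ ^ 2 * (ζ * (ζ - 1)) + cauchyG μ ζ * ((((n : ℝ) : ℂ) - 2) * ζ + ((1 - σ : ℝ) : ℂ))
        - (((n : ℝ) : ℂ) - 1) = 0) :
    μ.restrict ({0, 1}ᶜ) = volume.withDensity (fun x =>
    ENNReal.ofReal (indicator (Ioo (xminus σ θ) (xplus σ θ))
      (fun x => (σ + θ) * Real.sqrt ((x - xminus σ θ) * (xplus σ θ - x)) /
        (2 * Real.pi * x * (1 - x))) x)) := by
  have hn2 : (2 : ℝ) ≤ n := by exact_mod_cast hn
  have hn0 : (0 : ℝ) < n := by linarith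
  have hs : σ + θ = n := by rw [hσ, hθ]; ring
  obtain ⟨hm0, hmp, hp1', hdisc⟩ := fb_endpoints n hn p hp hp1 σ θ hσ hθ
  have hW := fb_withDensity n (1 - σ) μ H
  have hm : Measurable (fun x : ℝ => ENNReal.ofReal |x * (x - 1)|) := by fun_prop
  have hS : MeasurableSet ({0, 1}ᶜ : Set ℝ) := by measurability
  have hL : (μ.withDensity (fun x => ENNReal.ofReal |x * (x - 1)|)).withDensity
      (fun x => (ENNReal.ofReal |x * (x - 1)|)⁻¹) = μ.restrict ({0, 1}ᶜ) := by
    rw [← withDensity_mul μ hm (by fun_prop), ← withDensity_indicator_one hS]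
    congr 1
    ext x
    by_cases hx : x ∈ ({0, 1}ᶜ : Set ℝ)
    · rw [indicator_of_mem hx]
      simp only [mem_compl_iff, mem_insert_iff, mem_singleton_iff, not_or] at hx
      simp only [Pi.mul_apply, Pi.one_apply]
      apply ENNReal.mul_inv_cancel _ ENNReal.ofReal_ne_top
      have : 0 < |x * (x - 1)| := abs_pos.2 (mul_ne_zero hx.1 (sub_ne_zero.2 hx.2))
      simpa only [ne_eq, ENNReal.ofReal_eq_zero, not_le] using this
    · rw [indicator_of_notMem hx]
      simp only [mem_compl_iff, not_not, mem_insert_iff, mem_singleton_iff] at hx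
      rcases hx with hx | hx <;> simp [hx]
  rw [← hL, hW, ← withDensity_mul volume (by fun_prop) (by fun_prop)]
  apply withDensity_congr_ae
  have h0 : ∀ᵐ x : ℝ, x ≠ 0 := Measure.ae_ne volume 0
  have h1 : ∀ᵐ x : ℝ, x ≠ 1 := Measure.ae_ne volume 1
  filter_upwards [h0, h1] with x hx0 hx1
  have hxx : 0 < |x * (x - 1)| := abs_pos.2 (mul_ne_zero hx0 (sub_ne_zero.2 hx1))
  simp only [Pi.mul_apply]
  rw [← ENNReal.ofReal_inv_of_pos hxx, ← ENNReal.ofReal_mul (by have := Real.pi_pos; positivity)]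
  congr 1
  rw [hdisc, hs]
  by_cases hx : x ∈ Ioo (xminus σ θ) (xplus σ θ)
  · rw [indicator_of_mem hx, Real.sqrt_mul (sq_nonneg _), Real.sqrt_sq hn0.le]
    have hx0' : 0 < x := lt_of_le_of_lt hm0 hx.1
    have hx1' : x < 1 := lt_of_lt_of_le hx.2 hp1'
    have : |x * (x - 1)| = x * (1 - x) := by
      rw [abs_of_neg (by nlinarith)]; ring
    rw [this]
    have := Real.pi_pos
    have h3 : 0 < 1 - x := by linarith
    field_simp
  · rw [indicator_of_notMem hx]
    have : (n : ℝ) ^ 2 * ((x - xminus σ θ) * (xplus σ θ - x)) ≤ 0 := by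
      apply mul_nonpos_of_nonneg_of_nonpos (by positivity)
      rw [mem_Ioo, not_and_or, not_lt, not_lt] at hx
      rcases hx with hx | hx
      · exact mul_nonpos_of_nonpos_of_nonneg (by linarith) (by linarith)
      · exact mul_nonpos_of_nonneg_of_nonpos (by linarith) (by linarith)
    rw [Real.sqrt_eq_zero_of_nonpos this]
    simp

/-- Atom at a point `a` where `A(a) = 0`, written as `A(ζ) = (ζ-a) E(ζ)`, with sign `s = E(a)`. -/
lemma fb_atom (N b0 a : ℝ) (s : ℝ) (hs : s = 1 ∨ s = -1) (hN : 1 < N)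
    (μ : Measure ℝ) [IsProbabilityMeasure μ] (E B : ℂ → ℂ) (hE : Continuous E) (hB : Continuous B)
    (hEa : E a = s) (hBa : B a = -s * b0)
    (hsupp : ∀ᵐ x ∂μ, s * (a - x) ≥ 0)
    (H : ∀ ζ : ℂ, 0 < ζ.im →
      cauchyG μ ζ ^ 2 * ((ζ - a) * E ζ) + cauchyG μ ζ * B ζ - (N - 1) = 0) :
    μ.real {a} = max b0 0 := by
  have hlim := cauchyG_atom μ a
  set M := μ.real {a} with hM
  have hM0 : 0 ≤ M := measureReal_nonneg
  let Z : ℝ → ℂ := fun ε => a + ε * Complex.I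
  have hZ : Filter.Tendsto Z (nhdsWithin 0 (Ioi 0)) (nhds (a : ℂ)) := by
    have : Continuous Z := by fun_prop
    have h2 := (this.tendsto 0).mono_left (nhdsWithin_le_nhds (s := Ioi (0 : ℝ)))
    simpa [Z] using h2
  have hZim : ∀ ε, (Z ε).im = ε := by intro ε; simp [Z]
  have hZre : ∀ ε, (Z ε).re = a := by intro ε; simp [Z]
  have hsne : (s : ℂ) ≠ 0 := by rcases hs with h | h <;> simp [h]
  have hs2 : s * s = 1 := by rcases hs with h | h <;> simp [h]
  have hEl := (hE.tendsto a).comp hZ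
  have hBl := (hB.tendsto a).comp hZ
  rw [hEa] at hEl
  rw [hBa] at hBl
  -- the quadratic for the mass
  have hquad : M * (M - b0) = 0 := by
    have l1 : Filter.Tendsto (fun ε : ℝ => (ε * Complex.I * cauchyG μ (a + ε * Complex.I)) ^ 2 * E (Z ε)
        + (ε * Complex.I * cauchyG μ (a + ε * Complex.I)) * B (Z ε) - (N - 1) * (Z ε - a))
        (nhdsWithin 0 (Ioi 0)) (nhds ((M : ℂ) ^ 2 * s + M * (-s * b0) - (N - 1) * (a - a))) :=
      (((hlim.pow 2).mul hEl).add (hlim.mul hBl)).sub ((hZ.sub_const (a : ℂ)).const_mul _)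
    have l2 : Filter.Tendsto (fun ε : ℝ => (ε * Complex.I * cauchyG μ (a + ε * Complex.I)) ^ 2 * E (Z ε)
        + (ε * Complex.I * cauchyG μ (a + ε * Complex.I)) * B (Z ε) - (N - 1) * (Z ε - a))
        (nhdsWithin 0 (Ioi 0)) (nhds 0) := by
      refine tendsto_const_nhds.congr' ?_
      filter_upwards [self_mem_nhdsWithin] with ε hε
      have hε : 0 < ε := hε
      have h := H (Z ε) (by rw [hZim]; exact hε)
      have e : Z ε - a = ε * Complex.I := by simp [Z]
      rw [e] at h ⊢
      have e' : cauchyG μ (a + ε * Complex.I) = cauchyG μ (Z ε) := rfl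
      rw [e']
      linear_combination (-(ε * Complex.I)) * h
    have h3 := tendsto_nhds_unique l1 l2
    have h4 : (s : ℂ) * ((M * (M - b0) : ℝ) : ℂ) = 0 := by
      push_cast
      linear_combination h3
    rcases mul_eq_zero.1 h4 with h | h
    · exact absurd h hsne
    · exact_mod_cast h
  rcases le_or_gt b0 0 with hb | hb
  · rw [max_eq_right hb]
    rcases mul_eq_zero.1 hquad with h | h
    · exact h
    · linarith
  · rw [max_eq_left hb.le]
    rcases mul_eq_zero.1 hquad with h | h
    swap
    · linarith
    exfalso
    rw [h] at hlim
    have hden : Filter.Tendsto (fun ε : ℝ => (ε * Complex.I * cauchyG μ (a + ε * Complex.I)) * E (Z ε)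
        + B (Z ε)) (nhdsWithin 0 (Ioi 0)) (nhds (((0 : ℝ) : ℂ) * s + (-s * b0))) :=
      (hlim.mul hEl).add hBl
    have hne : (((0 : ℝ) : ℂ) * s + (-s * b0)) ≠ 0 := by
      simp only [Complex.ofReal_zero, zero_mul, zero_add]
      exact mul_ne_zero (neg_ne_zero.2 hsne) (by exact_mod_cast hb.ne')
    have hGl : Filter.Tendsto (fun ε : ℝ => cauchyG μ (Z ε)) (nhdsWithin 0 (Ioi 0))
        (nhds (((N : ℂ) - 1) * (((0 : ℝ) : ℂ) * s + (-s * b0))⁻¹)) := by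
      refine ((hden.inv₀ hne).const_mul _).congr' ?_
      filter_upwards [self_mem_nhdsWithin, hden.eventually_ne hne] with ε hε hne'
      have hε : 0 < ε := hε
      have h := H (Z ε) (by rw [hZim]; exact hε)
      have e : Z ε - a = ε * Complex.I := by simp [Z]
      rw [e] at h
      rw [← div_eq_mul_inv, div_eq_iff hne']
      have e' : cauchyG μ (a + ε * Complex.I) = cauchyG μ (Z ε) := rfl
      rw [e']
      linear_combination -h
    have hre := ((Complex.continuous_re.tendsto _).comp hGl).const_mul s
    have hval : s * (((N : ℂ) - 1) * (((0 : ℝ) : ℂ) * s + (-s * b0))⁻¹).re = -((N - 1) / b0) := by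
      have : (((N : ℂ) - 1) * (((0 : ℝ) : ℂ) * s + (-s * b0))⁻¹)
          = (((N - 1) * (-s * b0)⁻¹ : ℝ) : ℂ) := by push_cast; simp
      rw [this, Complex.ofReal_re]
      rcases hs with h | h <;> rw [h] <;> field_simp
    rw [hval] at hre
    have hnn : 0 ≤ -((N - 1) / b0) := by
      refine ge_of_tendsto hre ?_
      filter_upwards [self_mem_nhdsWithin] with ε hε
      have hε : 0 < ε := hε
      simp only [Function.comp]
      rw [cauchyG_re μ (Z ε) (by rw [hZim]; exact hε.ne'), ← integral_const_mul]
      apply integral_nonneg_of_ae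
      filter_upwards [hsupp] with x hx
      simp only [Pi.zero_apply, hZre]
      rw [← mul_div_assoc]
      apply div_nonneg hx (by positivity)
    have : 0 < (N - 1) / b0 := div_pos (by linarith) hb
    linarith

lemma fb_assemble (n : ℕ) (hn : 2 ≤ n) (p : ℝ) (hp : 0 < p) (hp1 : p < 1) (σ θ : ℝ)
    (hσ : σ = n * (1 - p)) (hθ : θ = n * p) (μ : Measure ℝ) [IsProbabilityMeasure μ]
    (H : ∀ ζ : ℂ, 0 < ζ.im →
      cauchyG μ ζ ^ 2 * (ζ * (ζ - 1)) + cauchyG μ ζ * ((((n : ℝ) : ℂ) - 2) * ζ + ((1 - σ : ℝ) : ℂ))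
        - (((n : ℝ) : ℂ) - 1) = 0) :
    μ = freeBinomial σ θ := by
  have hn2 : (2 : ℝ) ≤ n := by exact_mod_cast hn
  have hn0 : (0 : ℝ) < n := by linarith
  have hs : σ + θ = n := by rw [hσ, hθ]; ring
  have hσ0 : 0 < σ := by rw [hσ]; exact mul_pos hn0 (by linarith)
  have hθ0 : 0 < θ := by rw [hθ]; positivity
  obtain ⟨hm0, hmp, hp1', -⟩ := fb_endpoints n hn p hp hp1 σ θ hσ hθ
  have hR := fb_restrict n hn p hp hp1 σ θ hσ hθ μ H
  have hzero : ∀ T : Set ℝ, MeasurableSet T → T ⊆ {0, 1}ᶜ →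
      (∀ x ∈ T, x ∉ Ioo (xminus σ θ) (xplus σ θ)) → μ T = 0 := by
    intro T hT hT1 hT2
    have h1 : μ.restrict ({0, 1}ᶜ) T = μ T := by
      rw [Measure.restrict_apply hT, inter_eq_left.2 hT1]
    rw [← h1, hR, withDensity_apply _ hT]
    rw [setLIntegral_congr_fun hT (g := fun _ => 0)]
    · simp
    · intro x hx
      simp only
      rw [indicator_of_notMem (hT2 x hx)]
      simp
  have hneg : ∀ᵐ x ∂μ, (-1 : ℝ) * ((0 : ℝ) - x) ≥ 0 := by
    have h := hzero (Iio 0) measurableSet_Iio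
      (by intro x hx; simp only [mem_Iio] at hx; simp; constructor <;> linarith)
      (by intro x hx hx'; have := hx'.1; simp only [mem_Iio] at hx; linarith)
    rw [ae_iff]
    convert h using 2
    ext x; simp
  have hpos : ∀ᵐ x ∂μ, (1 : ℝ) * ((1 : ℝ) - x) ≥ 0 := by
    have h := hzero (Ioi 1) measurableSet_Ioi
      (by intro x hx; simp only [mem_Ioi] at hx; simp; constructor <;> linarith)
      (by intro x hx hx'; have := hx'.2; simp only [mem_Ioi] at hx; linarith)
    rw [ae_iff]
    convert h using 2
    ext x; simp
  have hA0 : μ.real {0} = max (1 - σ) 0 := by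
    refine fb_atom n (1 - σ) 0 (-1) (Or.inr rfl) (by linarith) μ (fun ζ => ζ - 1)
      (fun ζ => (((n : ℝ) : ℂ) - 2) * ζ + ((1 - σ : ℝ) : ℂ)) (by fun_prop) (by fun_prop)
      (by simp) (by simp) hneg ?_
    intro ζ hζ
    simpa using H ζ hζ
  have hA1 : μ.real {1} = max (1 - θ) 0 := by
    refine fb_atom n (1 - θ) 1 1 (Or.inl rfl) (by linarith) μ (fun ζ => ζ)
      (fun ζ => (((n : ℝ) : ℂ) - 2) * ζ + ((1 - σ : ℝ) : ℂ)) (by fun_prop) (by fun_prop)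
      (by simp) (by rw [← hs]; push_cast; ring) hpos ?_
    intro ζ hζ
    have := H ζ hζ
    rw [mul_comm ζ (ζ - 1)] at this
    simpa using this
  have hmass : ∀ (a τ : ℝ), 0 < τ → μ.real {a} = max (1 - τ) 0 →
      μ {a} = if 0 < τ ∧ τ < 1 then ENNReal.ofReal (1 - τ) else 0 := by
    intro a τ hτ h
    have e : μ {a} = ENNReal.ofReal (μ.real {a}) := (ofReal_measureReal).symm
    rw [e, h]
    split_ifs with hc
    · rw [max_eq_left (by linarith [hc.2])]
    · have : 1 ≤ τ := by
        by_contra h'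
        exact hc ⟨hτ, by linarith⟩
      rw [max_eq_right (by linarith)]
      simp
  unfold freeBinomial
  rw [← hmass 0 σ hσ0 hA0, ← hmass 1 θ hθ0 hA1, ← hR]
  have hS : MeasurableSet ({0, 1} : Set ℝ) := by measurability
  have h01 : μ.restrict {0, 1} = μ {0} • Measure.dirac 0 + μ {1} • Measure.dirac 1 := by
    rw [← Measure.restrict_singleton, ← Measure.restrict_singleton, ← Measure.restrict_union]
    · rfl
    · simp
    · simp
  rw [← h01, Measure.restrict_add_restrict_compl hS]

/-- The `n`-fold free convolution of `p δ₀ + (1-p) δ_{1/n}` is free-binomial `β(n(1-p), np)`.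
Free convolution is encoded through r-transforms: `rν` is an r-transform of
`ν = p δ₀ + (1-p) δ_{1/n}` (i.e. `G_ν(rν(z) + 1/z) = z` near `0`), and `μ` is the measure whose
r-transform is `n · rν`. -/
theorem freeConvolution_bernoulli_eq_freeBinomial (n : ℕ) (hn : 2 ≤ n)
    (p : ℝ) (hp : 0 < p) (hp1 : p < 1)
    (μ : Measure ℝ) [IsProbabilityMeasure μ] (rν : ℂ → ℂ)
    (hrν : ∀ᶠ z in nhdsWithin (0 : ℂ) {z | z ≠ 0},
      ∫ x, (rν z + z⁻¹ - (x : ℂ))⁻¹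
        ∂(ENNReal.ofReal p • Measure.dirac (0 : ℝ) +
          ENNReal.ofReal (1 - p) • Measure.dirac ((n : ℝ)⁻¹)) = z)
    (hrμ : ∀ᶠ z in nhdsWithin (0 : ℂ) {z | z ≠ 0},
      ∫ x, ((n : ℂ) * rν z + z⁻¹ - (x : ℂ))⁻¹ ∂μ = z) :
    μ = freeBinomial (n * (1 - p)) (n * p) := by
  refine fb_assemble n hn p hp hp1 _ _ rfl rfl μ fun ζ hζ => ?_
  have := fb_quadratic n hn p hp hp1 μ rν hrν hrμ ζ hζ
  push_cast
  exact this
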